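/- Let Φ be a real M×N matrix, K ≥ 1, ν > 0, δ2K, δ3K ∈ (0,1) with ν > δ2K + δ3K, and suppose: (i) for every u ∈ Σ_{2K}, |(1/M)·‖Φu‖₁ − ν‖u‖₂| ≤ δ2K·‖u‖₂, and (ii) for every u ∈ Σ_{2K} and v ∈ Σ_K with ⟨u,v⟩ = 0, |(1/M)·⟨sign(Φu), Φv⟩| ≤ δ3K·‖v‖₂. Let x, h ∈ ℝ^N with ‖x + h‖₁ ≤ ‖x‖₁ and ‖Φh‖₁ ≤ 2ε for some ε ≥ 0. Let T₀, T₁, …, T_L be pairwise disjoint subsets of {1,…,N} such that |T₀| = K, T₀ ∪ T₁ ∪ … ∪ T_L ⊇ supp(h), |T_k| = K for 1 ≤ k ≤ L−1, |T_L| ≤ K, and for every 1 ≤ k < L, every i ∈ T_k and every j ∈ T_{k+1} satisfy |h_i| ≥ |h_j|. Then ‖h_{T₀ ∪ T₁}‖₂ ≤ (2/(ν − δ2K − δ3K))·(ε/M + δ3K·e₀), where e₀ = ‖x_{T₀ᶜ}‖₁/√K and T₀ᶜ = {1,…,N} \ T₀. -/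

import Mathlib

/-! The argument is the standard cone-type estimate of compressed sensing, with the sign of `Φ u`
playing the role of a dual certificate. Put `u = h_{T₀ ∪ T₁}`, which is `2K`-sparse. Since
`‖Φ u‖₁ = ⟨sign (Φ u), Φ u⟩` and `u = h - ∑_{k ≥ 2} h_{T_k}`, the bound on `Φ h` and `hΦ2`
give `‖Φ u‖₁ / M ≤ 2 ε / M + δ3K ∑_{k ≥ 2} ‖h_{T_k}‖₂`, while `hΦ1` bounds the left side
below by `(ν - δ2K) ‖u‖₂`.

The tail is controlled by shelling: every entry of `h` on `T_{k+1}` is at most the mean of `|h|` on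
`T_k`, so `∑_{k ≥ 2} ‖h_{T_k}‖₂ ≤ ‖h_{T₀ᶜ}‖₁ / √K` (`shell_bound`). From `‖x + h‖₁ ≤ ‖x‖₁` follows
`‖h_{T₀ᶜ}‖₁ ≤ 2 ‖x_{T₀ᶜ}‖₁ + ‖h_{T₀}‖₁` (`cone_bound`), and by Cauchy–Schwarz
`‖h_{T₀}‖₁ ≤ √K ‖u‖₂` (`head_l1_le`). Solving the resulting linear inequality for `‖u‖₂` yields the
claim. -/

open Finset MeasureTheory ProbabilityTheory Real

/-- componentwise sign function: 1 if positive, -1 otherwise -/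
noncomputable def sgn (t : ℝ) : ℝ := if 0 < t then 1 else -1

/-- ℓ1 norm -/
noncomputable def l1 {m : ℕ} (w : Fin m → ℝ) : ℝ := ∑ j, |w j|

/-- ℓ2 (Euclidean) norm -/
noncomputable def l2 {m : ℕ} (w : Fin m → ℝ) : ℝ := Real.sqrt (∑ j, w j ^ 2)

/-- ℓ0 "norm": number of nonzero entries -/
noncomputable def l0 {m : ℕ} (w : Fin m → ℝ) : ℕ :=
  (Finset.univ.filter fun i => w i ≠ 0).card

/-- K-sparsity: membership in Σ_K -/
noncomputable def sparse {n : ℕ} (K : ℕ) (u : Fin n → ℝ) : Prop := l0 u ≤ K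

/-- Euclidean inner product -/
noncomputable def ip {m : ℕ} (u v : Fin m → ℝ) : ℝ := ∑ j, u j * v j

/-- restriction of a vector to a set of indices (zero outside) -/
noncomputable def restrict {n : ℕ} (u : Fin n → ℝ) (S : Finset (Fin n)) : Fin n → ℝ :=
  fun i => if i ∈ S then u i else 0

/-- `xK` is a best K-term approximation of `x` -/
noncomputable def IsBestKTermApprox {n : ℕ} (K : ℕ) (x xK : Fin n → ℝ) : Prop :=
  ∃ S : Finset (Fin n), S.card = K ∧ (∀ i ∈ S, xK i = x i) ∧ (∀ i ∉ S, xK i = 0) ∧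
    ∀ i ∈ S, ∀ j ∉ S, |x j| ≤ |x i|

lemma l1_restrict {n : ℕ} (u : Fin n → ℝ) (S : Finset (Fin n)) :
    l1 (restrict u S) = ∑ i ∈ S, |u i| := by
  simp only [l1, _root_.restrict, apply_ite abs, abs_zero, Finset.sum_ite_mem, Finset.univ_inter]

lemma l2_restrict {n : ℕ} (u : Fin n → ℝ) (S : Finset (Fin n)) :
    l2 (restrict u S) = Real.sqrt (∑ i ∈ S, u i ^ 2) := by
  simp only [l2, _root_.restrict, ite_pow, ne_eq, OfNat.ofNat_ne_zero, not_false_eq_true, zero_pow,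
    Finset.sum_ite_mem, Finset.univ_inter]

lemma sparse_restrict {n : ℕ} (u : Fin n → ℝ) (S : Finset (Fin n)) {k : ℕ} (hS : S.card ≤ k) :
    sparse k (restrict u S) := by
  refine (Finset.card_le_card fun i hi => ?_).trans hS
  by_contra hc
  simp [_root_.restrict, hc] at hi

lemma ip_restrict_of_disjoint {n : ℕ} (u v : Fin n → ℝ) {S S' : Finset (Fin n)}
    (hd : Disjoint S S') : ip (restrict u S) (restrict v S') = 0 := by
  refine Finset.sum_eq_zero fun i _ => ?_
  by_cases hi : i ∈ S
  · simp [_root_.restrict, Finset.disjoint_left.1 hd hi]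
  · simp [_root_.restrict, hi]

lemma ip_sgn_self {m : ℕ} (w : Fin m → ℝ) : ip (fun j => sgn (w j)) w = l1 w := by
  refine Finset.sum_congr rfl fun j _ => ?_
  by_cases hj : 0 < w j
  · simp [sgn, hj, abs_of_pos hj]
  · simp [sgn, hj, abs_of_nonpos (not_lt.1 hj)]

lemma ip_sgn_le {m : ℕ} (w z : Fin m → ℝ) : ip (fun j => sgn (w j)) z ≤ l1 z := by
  refine Finset.sum_le_sum fun j _ => ?_
  by_cases hj : 0 < w j
  · simp [sgn, hj, le_abs_self]
  · simp [sgn, hj, neg_le_abs]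

lemma ip_sub_right {m : ℕ} (s a b : Fin m → ℝ) : ip s (a - b) = ip s a - ip s b := by
  simp [ip, mul_sub, Finset.sum_sub_distrib]

lemma ip_sum_right {m : ℕ} {ι : Type*} (s : Fin m → ℝ) (I : Finset ι) (f : ι → Fin m → ℝ) :
    ip s (∑ k ∈ I, f k) = ∑ k ∈ I, ip s (f k) := by
  simp only [ip, Finset.sum_apply, Finset.mul_sum]
  exact Finset.sum_comm

/-- The `ℓ²` norm of `h` on a block is at most `1/√K` times its `ℓ¹` norm on a preceding block of
size exactly `K` whose entries dominate. -/
lemma block_bound {n : ℕ} (h : Fin n → ℝ) {A B : Finset (Fin n)} {K : ℕ} (hK : 1 ≤ K)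
    (hA : A.card = K) (hB : B.card ≤ K) (hAB : ∀ i ∈ A, ∀ j ∈ B, |h j| ≤ |h i|) :
    l2 (restrict h B) ≤ l1 (restrict h A) / Real.sqrt K := by
  have hK0 : (0 : ℝ) < K := by exact_mod_cast hK
  rw [l1_restrict, l2_restrict]
  set a := ∑ i ∈ A, |h i| with ha
  have ha0 : 0 ≤ a := Finset.sum_nonneg fun i _ => abs_nonneg _
  have hj : ∀ j ∈ B, h j ^ 2 ≤ (a / K) ^ 2 := by
    intro j hjB
    have h1 : (K : ℝ) * |h j| ≤ a := by
      have := Finset.card_nsmul_le_sum A (fun i => |h i|) (|h j|) fun i hi => hAB i hi j hjB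
      simpa [hA] using this
    rw [← sq_abs (h j)]
    have h2 : |h j| ≤ a / K := by
      rw [le_div_iff₀ hK0]; linarith
    exact pow_le_pow_left₀ (abs_nonneg _) h2 2
  have hs : ∑ j ∈ B, h j ^ 2 ≤ K * (a / K) ^ 2 := by
    have := Finset.sum_le_card_nsmul B (fun j => h j ^ 2) _ hj
    rw [nsmul_eq_mul] at this
    exact this.trans (mul_le_mul_of_nonneg_right (by exact_mod_cast hB) (sq_nonneg _))
  refine Real.sqrt_le_iff.2 ⟨by positivity, hs.trans (le_of_eq ?_)⟩
  rw [div_pow, div_pow, Real.sq_sqrt hK0.le]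
  field_simp

/-- Summed block estimate: the blocks from the second one on have total `ℓ²` norm at most
`‖h_{T₀ᶜ}‖₁ / √K`. The number of blocks besides `T 0` is `m + 1`. -/
lemma shell_bound {n : ℕ} (h : Fin n → ℝ) {K : ℕ} (hK : 1 ≤ K) (m : ℕ)
    (T : ℕ → Finset (Fin n))
    (hdisj : ∀ k l, k ≤ m + 1 → l ≤ m + 1 → k ≠ l → Disjoint (T k) (T l))
    (hcard : ∀ k, 1 ≤ k → k < m + 1 → (T k).card = K)
    (hcardL : (T (m + 1)).card ≤ K)
    (hmono : ∀ k, 1 ≤ k → k < m + 1 → ∀ i ∈ T k, ∀ j ∈ T (k + 1), |h j| ≤ |h i|) :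
    ∑ k ∈ Finset.range m, l2 (restrict h (T (k + 2))) ≤
      l1 (restrict h (T 0)ᶜ) / Real.sqrt K := by
  have h1 : ∀ k ∈ Finset.range m,
      l2 (restrict h (T (k + 2))) ≤ l1 (restrict h (T (k + 1))) / Real.sqrt K := by
    intro k hk
    have hk := Finset.mem_range.1 hk
    refine block_bound h hK (hcard _ (by omega) (by omega)) ?_ (hmono _ (by omega) (by omega))
    rcases Nat.lt_or_ge (k + 2) (m + 1) with h2 | h2
    · exact (hcard _ (by omega) h2).le
    · rwa [show k + 2 = m + 1 by omega]
  refine (Finset.sum_le_sum h1).trans ?_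
  rw [← Finset.sum_div]
  refine div_le_div_of_nonneg_right ?_ (Real.sqrt_nonneg _)
  simp only [l1_restrict]
  rw [← Finset.sum_biUnion]
  · refine Finset.sum_le_sum_of_subset_of_nonneg ?_ fun _ _ _ => abs_nonneg _
    intro i hi
    obtain ⟨k, hk, hik⟩ := Finset.mem_biUnion.1 hi
    have hk := Finset.mem_range.1 hk
    exact Finset.mem_compl.2
      (Finset.disjoint_left.1 (hdisj (k + 1) 0 (by omega) (by omega) (by omega)) hik)
  · intro k hk l hl hkl
    have hk := Finset.mem_range.1 hk
    have hl := Finset.mem_range.1 hl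
    exact hdisj _ _ (by omega) (by omega) (by omega)

lemma cone_bound {n : ℕ} (x h : Fin n → ℝ) (hxh : l1 (x + h) ≤ l1 x) (S : Finset (Fin n)) :
    l1 (restrict h Sᶜ) ≤ 2 * l1 (restrict x Sᶜ) + l1 (restrict h S) := by
  simp only [l1_restrict]
  simp only [l1, Pi.add_apply] at hxh
  rw [← Finset.sum_add_sum_compl S, ← Finset.sum_add_sum_compl S (fun i => |x i|)] at hxh
  have h1 : ∑ i ∈ S, |x i| - ∑ i ∈ S, |h i| ≤ ∑ i ∈ S, |x i + h i| := by
    rw [← Finset.sum_sub_distrib]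
    refine Finset.sum_le_sum fun i _ => ?_
    have := abs_sub_abs_le_abs_sub (x i) (-h i)
    simpa using this
  have h2 : ∑ i ∈ Sᶜ, |h i| - ∑ i ∈ Sᶜ, |x i| ≤ ∑ i ∈ Sᶜ, |x i + h i| := by
    rw [← Finset.sum_sub_distrib]
    refine Finset.sum_le_sum fun i _ => ?_
    have := abs_sub_abs_le_abs_sub (h i) (-x i)
    simpa [add_comm] using this
  linarith

lemma head_l1_le {n : ℕ} (h : Fin n → ℝ) {S S' : Finset (Fin n)} (hS : S ⊆ S') :
    l1 (restrict h S) ≤ Real.sqrt S.card * l2 (restrict h S') := by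
  rw [l1_restrict, l2_restrict, ← Real.sqrt_mul (Nat.cast_nonneg _)]
  refine Real.le_sqrt_of_sq_le ?_
  have h1 := sq_sum_le_card_mul_sum_sq (s := S) (f := fun i => |h i|)
  simp only [sq_abs] at h1
  refine h1.trans (mul_le_mul_of_nonneg_left ?_ (Nat.cast_nonneg _))
  exact Finset.sum_le_sum_of_subset_of_nonneg hS fun _ _ _ => sq_nonneg _

lemma restrict_head_eq {n : ℕ} (h : Fin n → ℝ) (m : ℕ) (T : ℕ → Finset (Fin n))
    (hdisj : ∀ k l, k ≤ m + 1 → l ≤ m + 1 → k ≠ l → Disjoint (T k) (T l))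
    (hcover : ∀ i, h i ≠ 0 → ∃ k, k ≤ m + 1 ∧ i ∈ T k) :
    restrict h (T 0 ∪ T 1) = h - ∑ k ∈ Finset.range m, restrict h (T (k + 2)) := by
  funext i
  simp only [Pi.sub_apply, Finset.sum_apply]
  by_cases hi : h i = 0
  · simp [_root_.restrict, hi]
  obtain ⟨k, hk, hik⟩ := hcover i hi
  have huniq : ∀ l, l ≤ m + 1 → l ≠ k → i ∉ T l := fun l hl hlk =>
    Finset.disjoint_left.1 (hdisj k l hk hl hlk.symm) hik
  rcases Nat.lt_or_ge k 2 with hk2 | hk2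
  · rw [Finset.sum_eq_zero]
    · have : i ∈ T 0 ∪ T 1 := by
        interval_cases k <;> simp [hik]
      simp [_root_.restrict, this]
    · intro l hl
      have hl := Finset.mem_range.1 hl
      simp [_root_.restrict, huniq (l + 2) (by omega) (by omega)]
  · obtain ⟨k, rfl⟩ := Nat.exists_eq_add_of_le' hk2
    rw [Finset.sum_eq_single_of_mem k (Finset.mem_range.2 (by omega))]
    · simp [_root_.restrict, hik, huniq 0 (by omega) (by omega), huniq 1 (by omega) (by omega)]
    · intro l hl hlk
      have hl := Finset.mem_range.1 hl
      simp [_root_.restrict, huniq (l + 2) (by omega) (by omega)]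

theorem head_l2_bound
    {M N : ℕ} (Φ : Matrix (Fin M) (Fin N) ℝ) (K : ℕ) (hK : 1 ≤ K)
    (ν δ2K δ3K : ℝ) (hν : 0 < ν)
    (hδ2 : δ2K ∈ Set.Ioo (0 : ℝ) 1) (hδ3 : δ3K ∈ Set.Ioo (0 : ℝ) 1)
    (hsum : δ2K + δ3K < ν)
    (hΦ1 : ∀ u : Fin N → ℝ, sparse (2 * K) u →
      |(1 / (M : ℝ)) * l1 (Φ.mulVec u) - ν * l2 u| ≤ δ2K * l2 u)
    (hΦ2 : ∀ u v : Fin N → ℝ, sparse (2 * K) u → sparse K v → ip u v = 0 →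
      |(1 / (M : ℝ)) * ip (fun j => sgn (Φ.mulVec u j)) (Φ.mulVec v)| ≤ δ3K * l2 v)
    (x h : Fin N → ℝ) (hxh : l1 (x + h) ≤ l1 x)
    (ε : ℝ) (hε : 0 ≤ ε) (hΦh : l1 (Φ.mulVec h) ≤ 2 * ε)
    (L : ℕ) (hL : 1 ≤ L) (T : ℕ → Finset (Fin N))
    (hdisj : ∀ k l, k ≤ L → l ≤ L → k ≠ l → Disjoint (T k) (T l))
    (hcard0 : (T 0).card = K)
    (hcover : ∀ i, h i ≠ 0 → ∃ k, k ≤ L ∧ i ∈ T k)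
    (hcard : ∀ k, 1 ≤ k → k < L → (T k).card = K)
    (hcardL : (T L).card ≤ K)
    (hmono : ∀ k, 1 ≤ k → k < L → ∀ i ∈ T k, ∀ j ∈ T (k + 1), |h j| ≤ |h i|) :
    l2 (restrict h (T 0 ∪ T 1)) ≤
      (2 / (ν - δ2K - δ3K)) *
        (ε / (M : ℝ) + δ3K * (l1 (restrict x ((T 0)ᶜ)) / Real.sqrt K)) := by
  obtain ⟨m, rfl⟩ := Nat.exists_eq_add_of_le' hL
  have hKr : (0 : ℝ) < Real.sqrt K := Real.sqrt_pos.2 (by exact_mod_cast hK)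
  have hM : (0 : ℝ) ≤ 1 / (M : ℝ) := by positivity
  set u := restrict h (T 0 ∪ T 1) with hu
  have hcardle : ∀ k, 1 ≤ k → k ≤ m + 1 → (T k).card ≤ K := by
    intro k h1 h2
    rcases Nat.lt_or_ge k (m + 1) with h3 | h3
    · exact (hcard k h1 h3).le
    · rwa [show k = m + 1 by omega]
  have husp : sparse (2 * K) u := by
    refine sparse_restrict h _ ((Finset.card_union_le _ _).trans ?_)
    have := hcardle 1 le_rfl (by omega)
    omega
  have hlow := (abs_le.1 (hΦ1 u husp)).1
  have hup : 1 / (M : ℝ) * l1 (Φ.mulVec u) ≤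
      1 / (M : ℝ) * (2 * ε) + δ3K * ∑ k ∈ Finset.range m, l2 (restrict h (T (k + 2))) := by
    have hdec : Φ.mulVec u =
        Φ.mulVec h - ∑ k ∈ Finset.range m, Φ.mulVec (restrict h (T (k + 2))) := by
      rw [hu, restrict_head_eq h m T hdisj hcover, Matrix.mulVec_sub, Matrix.mulVec_sum]
    have hip : l1 (Φ.mulVec u) = ip (fun j => sgn (Φ.mulVec u j)) (Φ.mulVec h) -
        ∑ k ∈ Finset.range m,
          ip (fun j => sgn (Φ.mulVec u j)) (Φ.mulVec (restrict h (T (k + 2)))) := by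
      rw [← ip_sum_right, ← ip_sub_right, ← hdec, ip_sgn_self]
    have hhead : 1 / (M : ℝ) * ip (fun j => sgn (Φ.mulVec u j)) (Φ.mulVec h) ≤
        1 / (M : ℝ) * (2 * ε) :=
      mul_le_mul_of_nonneg_left ((ip_sgn_le _ _).trans hΦh) hM
    have htail : ∑ k ∈ Finset.range m, -(δ3K * l2 (restrict h (T (k + 2)))) ≤
        ∑ k ∈ Finset.range m, 1 / (M : ℝ) *
          ip (fun j => sgn (Φ.mulVec u j)) (Φ.mulVec (restrict h (T (k + 2)))) := by
      refine Finset.sum_le_sum fun k hk => ?_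
      have hk := Finset.mem_range.1 hk
      refine (abs_le.1 (hΦ2 u _ husp
        (sparse_restrict h _ (hcardle (k + 2) (by omega) (by omega))) ?_)).1
      refine ip_restrict_of_disjoint h h (Finset.disjoint_union_left.2 ⟨?_, ?_⟩)
      · exact hdisj _ _ (by omega) (by omega) (by omega)
      · exact hdisj _ _ (by omega) (by omega) (by omega)
    rw [Finset.sum_neg_distrib, ← Finset.mul_sum, ← Finset.mul_sum] at htail
    rw [hip, mul_sub]
    linarith
  have htailsum : ∑ k ∈ Finset.range m, l2 (restrict h (T (k + 2))) ≤
      2 * (l1 (restrict x (T 0)ᶜ) / Real.sqrt K) + l2 u := by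
    refine (shell_bound h hK m T hdisj hcard hcardL hmono).trans ?_
    rw [div_le_iff₀ hKr]
    have h1 := cone_bound x h hxh (T 0)
    have h2 := head_l1_le h (Finset.subset_union_left (s₁ := T 0) (s₂ := T 1))
    rw [hcard0, ← hu] at h2
    have h3 : (2 * (l1 (restrict x (T 0)ᶜ) / Real.sqrt K) + l2 u) * Real.sqrt K =
        2 * l1 (restrict x (T 0)ᶜ) + Real.sqrt K * l2 u := by
      field_simp
    linarith
  have hδ := mul_le_mul_of_nonneg_left htailsum hδ3.1.le
  have hpos : 0 < ν - δ2K - δ3K := by linarith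
  rw [div_mul_eq_mul_div, le_div_iff₀ hpos]
  have hεM : 1 / (M : ℝ) * (2 * ε) = 2 * (ε / M) := by ring
  linarith
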